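/- arXiv:math/0108144 — 2 statements merged into one kernel-verified Lean document; each statement's English description precedes it below -/
import Mathlib

section
/- Formal Poincaré Lemma (full exactness): Define Ω^p = R ⊗_ℂ ⋀^p(ℂ^n) (the p-forms with formal power series coefficients) and the ℂ-linear exterior derivative d : Ω^p → Ω^{p+1} by d(g ⊗ ω) = Σ_{i=1}^n ∂ᵢ(g) ⊗ (eᵢ ∧ ω), where e₁,…,eₙ is the standard basis of ℂ^n. Then the sequence 0 → ℂ → R = Ω^0 →^d Ω^1 →^d ⋯ →^d Ω^n → 0 is exact: the kernel of d : Ω^0 → Ω^1 consists exactly of the constant series ℂ·1, for each 1 ≤ p ≤ n−1 the kernel of d : Ω^p → Ω^{p+1} equals the image of d : Ω^{p−1} → Ω^p, and d : Ω^{n−1} → Ω^n is surjective. -/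
noncomputable section

open TensorProduct

/-- The formal partial derivative `∂ᵢ` on `ℂ[[x₁,…,xₙ]]`, determined by
`coeff α (∂ᵢ g) = (α i + 1) • coeff (α + eᵢ) g`. -/
def pd {σ : Type*} (i : σ) (g : MvPowerSeries σ ℂ) : MvPowerSeries σ ℂ :=
  fun α => ((α i : ℂ) + 1) * MvPowerSeries.coeff (α + Finsupp.single i 1) g

lemma coeff_pd {σ : Type*} (i : σ) (g : MvPowerSeries σ ℂ) (α : σ →₀ ℕ) :
    MvPowerSeries.coeff α (pd i g) =
      ((α i : ℂ) + 1) * MvPowerSeries.coeff (α + Finsupp.single i 1) g := rfl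

/-- `∂ᵢ` as a `ℂ`-linear endomorphism of `R = ℂ[[x₁,…,xₙ]]`. -/
def pdL (n : ℕ) (i : Fin n) : MvPowerSeries (Fin n) ℂ →ₗ[ℂ] MvPowerSeries (Fin n) ℂ where
  toFun := pd i
  map_add' a b := by ext α; simp [coeff_pd, mul_add]
  map_smul' c a := by ext α; simp [coeff_pd]; ring

/-- `Ω^p = R ⊗_ℂ ⋀^p(ℂ^n)`, the `p`-forms with formal power series coefficients. -/
abbrev Omega (n p : ℕ) : Type _ :=
  MvPowerSeries (Fin n) ℂ ⊗[ℂ] (⋀[ℂ]^p (Fin n → ℂ))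

/-- Left exterior multiplication by the standard basis vector `eᵢ`,
as a map `⋀^p(ℂ^n) → ⋀^{p+1}(ℂ^n)`. -/
def wedgeE (n : ℕ) (i : Fin n) (p : ℕ) :
    (⋀[ℂ]^p (Fin n → ℂ)) →ₗ[ℂ] (⋀[ℂ]^(p + 1) (Fin n → ℂ)) where
  toFun ω := ⟨ExteriorAlgebra.ι ℂ (Pi.single i 1 : Fin n → ℂ) * (ω : ExteriorAlgebra ℂ (Fin n → ℂ)), by
    have h := Submodule.mul_mem_mul
      (LinearMap.mem_range_self (ExteriorAlgebra.ι ℂ (M := Fin n → ℂ)) (Pi.single i 1)) ω.2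
    rwa [← pow_succ'] at h⟩
  map_add' a b := Subtype.ext (by push_cast; exact mul_add _ _ _)
  map_smul' c a := Subtype.ext (by push_cast; exact mul_smul_comm c _ _)

/-- The exterior derivative `d : Ω^p → Ω^{p+1}`, `d(g ⊗ ω) = Σᵢ ∂ᵢ(g) ⊗ (eᵢ ∧ ω)`. -/
def D (n p : ℕ) : Omega n p →ₗ[ℂ] Omega n (p + 1) :=
  ∑ i : Fin n, TensorProduct.map (pdL n i) (wedgeE n i p)

/-- `1 ∈ ⋀^0(ℂ^n)`. -/
def one0 (n : ℕ) : ⋀[ℂ]^0 (Fin n → ℂ) :=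
  ⟨1, by exact Submodule.one_le.mp (le_of_eq (pow_zero _).symm)⟩

/-!
By Cartan's formula, the anticommutator of `d` with the contraction along the Euler vector field
`∑ᵢ xᵢ ∂ᵢ` is the Lie derivative along that field, which multiplies the monomial form `x^α ⊗ ω`,
`ω ∈ ⋀^p`, by its weight `|α| + p`. In characteristic zero this weight is invertible unless
`α = 0` and `p = 0`, so dividing by it turns the contraction into a homotopy between the identity
and the projection onto the constants `ℂ ⊆ Ω⁰`.
-/

section ExteriorAlgebra

variable {R M : Type*} [CommRing R] [AddCommGroup M] [Module R M]

theorem mem_exteriorPower_zero_iff {x : ExteriorAlgebra R M} :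
    x ∈ ⋀[R]^0 M ↔ ∃ r, algebraMap R (ExteriorAlgebra R M) r = x := by
  rw [ExteriorAlgebra.exteriorPower, pow_zero, Submodule.mem_one]

theorem contractLeft_eq_zero_of_mem_exteriorPower_zero (d : Module.Dual R M)
    {x : ExteriorAlgebra R M} (hx : x ∈ ⋀[R]^0 M) : CliffordAlgebra.contractLeft d x = 0 := by
  obtain ⟨r, rfl⟩ := mem_exteriorPower_zero_iff.mp hx
  exact CliffordAlgebra.contractLeft_algebraMap _ _ _

theorem ι_mul_mem_exteriorPower_succ (v : M) {p : ℕ} {x : ExteriorAlgebra R M}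
    (hx : x ∈ ⋀[R]^p M) : ExteriorAlgebra.ι R v * x ∈ ⋀[R]^(p + 1) M := by
  rw [ExteriorAlgebra.exteriorPower, pow_succ']
  exact Submodule.mul_mem_mul (LinearMap.mem_range_self _ v) hx

@[elab_as_elim]
theorem exteriorPower_succ_induction {p : ℕ} {P : ExteriorAlgebra R M → Prop}
    (ι_mul : ∀ (v : M), ∀ x ∈ ⋀[R]^p M, P (ExteriorAlgebra.ι R v * x))
    (add : ∀ x y, P x → P y → P (x + y)) {x : ExteriorAlgebra R M} (hx : x ∈ ⋀[R]^(p + 1) M) :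
    P x := by
  rw [ExteriorAlgebra.exteriorPower, pow_succ'] at hx
  refine Submodule.mul_induction_on hx ?_ add
  rintro _ ⟨v, rfl⟩ y hy
  exact ι_mul v y hy

theorem contractLeft_mem_exteriorPower (d : Module.Dual R M) {p : ℕ} {x : ExteriorAlgebra R M}
    (hx : x ∈ ⋀[R]^(p + 1) M) : CliffordAlgebra.contractLeft d x ∈ ⋀[R]^p M := by
  induction p generalizing x with
  | zero =>
    refine exteriorPower_succ_induction (fun v y hy => ?_) (fun y z hy hz => ?_) hx
    · rw [CliffordAlgebra.contractLeft_ι_mul, contractLeft_eq_zero_of_mem_exteriorPower_zero d hy,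
        mul_zero, sub_zero]
      exact Submodule.smul_mem _ _ hy
    · exact map_add (CliffordAlgebra.contractLeft d) y z ▸ add_mem hy hz
  | succ p ih =>
    refine exteriorPower_succ_induction (fun v y hy => ?_) (fun y z hy hz => ?_) hx
    · rw [CliffordAlgebra.contractLeft_ι_mul]
      exact sub_mem (Submodule.smul_mem _ _ hy) (ι_mul_mem_exteriorPower_succ v (ih hy))
    · exact map_add (CliffordAlgebra.contractLeft d) y z ▸ add_mem hy hz

theorem sum_ι_mul_contractLeft_coord {I : Type*} [Fintype I] (b : Module.Basis I R M) {p : ℕ}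
    {x : ExteriorAlgebra R M} (hx : x ∈ ⋀[R]^p M) :
    ∑ i, ExteriorAlgebra.ι R (b i) * CliffordAlgebra.contractLeft (b.coord i) x = p • x := by
  induction p generalizing x with
  | zero => simp [contractLeft_eq_zero_of_mem_exteriorPower_zero _ hx]
  | succ p ih =>
    refine exteriorPower_succ_induction (fun v y hy => ?_) (fun y z hy hz => ?_) hx
    · have leibniz (i : I) : ExteriorAlgebra.ι R (b i) *
          CliffordAlgebra.contractLeft (b.coord i) (ExteriorAlgebra.ι R v * y) =
          ExteriorAlgebra.ι R (b.repr v i • b i) * y + ExteriorAlgebra.ι R v *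
            (ExteriorAlgebra.ι R (b i) * CliffordAlgebra.contractLeft (b.coord i) y) := by
        have swap := eq_neg_of_add_eq_zero_left (ExteriorAlgebra.ι_add_mul_swap (R := R) (b i) v)
        rw [CliffordAlgebra.contractLeft_ι_mul, mul_sub, ← mul_assoc, swap, neg_mul, sub_neg_eq_add,
          map_smul, smul_mul_assoc, mul_smul_comm, mul_assoc, b.coord_apply]
      simp only [leibniz, Finset.sum_add_distrib, ← Finset.sum_mul, ← Finset.mul_sum, ← map_sum,
        b.sum_repr]
      rw [ih hy, mul_smul_comm, succ_nsmul']
    · simp only [map_add, mul_add, Finset.sum_add_distrib, hy, hz, smul_add]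

/-- The interior product `⋀^(p+1) M → ⋀^p M` with a linear form `d`: the restriction of
`CliffordAlgebra.contractLeft d` to one degree. -/
def interiorProduct (d : Module.Dual R M) (p : ℕ) : ⋀[R]^(p + 1) M →ₗ[R] ⋀[R]^p M :=
  (CliffordAlgebra.contractLeft d).restrict fun _ => contractLeft_mem_exteriorPower d

theorem coe_interiorProduct (d : Module.Dual R M) (p : ℕ) (x : ⋀[R]^(p + 1) M) :
    (interiorProduct d p x : ExteriorAlgebra R M) = CliffordAlgebra.contractLeft d (x : _) :=
  rfl

theorem exteriorPower_subsingleton_of_finrank_lt [Nontrivial R] [Module.Free R M]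
    [Module.Finite R M] {p : ℕ} (hp : Module.finrank R M < p) : Subsingleton (⋀[R]^p M) := by
  rw [← Module.finrank_eq_zero_iff_of_free R, exteriorPower.finrank_eq,
    Nat.choose_eq_zero_of_lt hp]

end ExteriorAlgebra

section PowerSeries

open MvPowerSeries

variable {σ : Type*}

section CommSemiring

variable {R : Type*} [CommSemiring R]

theorem pderiv_pderiv_comm (i j : σ) (f : MvPowerSeries σ R) :
    pderiv R i (pderiv R j f) = pderiv R j (pderiv R i f) := by
  classical
  obtain rfl | hij := eq_or_ne i j
  · rfl
  ext α
  simp only [coeff_pderiv, Finsupp.add_apply, Finsupp.single_apply, hij, hij.symm, if_false,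
    add_zero]
  rw [add_right_comm, mul_right_comm]

theorem pderiv_X_mul [DecidableEq σ] (i j : σ) (f : MvPowerSeries σ R) :
    pderiv R i (X j * f) = (if i = j then f else 0) + X j * pderiv R i f := by
  rw [Derivation.leibniz, pderiv_X, Pi.single_apply, smul_eq_mul, smul_eq_mul, mul_ite, mul_one,
    mul_zero, add_comm]
  simp only [eq_comm]

theorem coeff_X_mul_pderiv (i : σ) (f : MvPowerSeries σ R) (α : σ →₀ ℕ) :
    coeff α (X i * pderiv R i f) = α i * coeff α f := by
  classical
  by_cases h : Finsupp.single i 1 ≤ α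
  · obtain ⟨β, rfl⟩ := exists_add_of_le h
    rw [X_def, coeff_add_monomial_mul, coeff_pderiv, one_mul, add_comm β, mul_comm]
    simp [add_comm]
  · have hα : α i = 0 := by simpa using h
    rw [X_def, coeff_monomial_mul, if_neg h, hα, Nat.cast_zero, zero_mul]

/-- Multiplication of the coefficient at `α` by `c α`: the Hadamard product with the series whose
coefficients are `c`. -/
def coeffwiseMul (c : (σ →₀ ℕ) → R) : MvPowerSeries σ R →ₗ[R] MvPowerSeries σ R :=
  LinearMap.pi fun α => c α • coeff α

theorem coeff_coeffwiseMul (c : (σ →₀ ℕ) → R) (f : MvPowerSeries σ R) (α : σ →₀ ℕ) :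
    coeff α (coeffwiseMul c f) = c α * coeff α f :=
  rfl

theorem sum_X_mul_pderiv [Fintype σ] (f : MvPowerSeries σ R) :
    ∑ i, X i * pderiv R i f = coeffwiseMul (fun α => (α.degree : R)) f := by
  ext α
  simp only [map_sum, coeff_X_mul_pderiv, coeff_coeffwiseMul, Finsupp.degree_eq_sum, Nat.cast_sum,
    Finset.sum_mul]

end CommSemiring

section Field

variable {K : Type*} [Field K]

/-- The inverse of `E + p`, where `E = ∑ᵢ xᵢ ∂ᵢ` is the Euler operator: it divides the coefficient
at `α` by `|α| + p`. As `0⁻¹ = 0`, for `p = 0` it annihilates the constant term. -/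
def eulerInv (p : ℕ) : MvPowerSeries σ K →ₗ[K] MvPowerSeries σ K :=
  coeffwiseMul fun α => ((α.degree + p : ℕ) : K)⁻¹

theorem coeff_eulerInv (p : ℕ) (f : MvPowerSeries σ K) (α : σ →₀ ℕ) :
    coeff α (eulerInv p f) = ((α.degree + p : ℕ) : K)⁻¹ * coeff α f :=
  rfl

theorem pderiv_eulerInv (i : σ) (p : ℕ) (f : MvPowerSeries σ K) :
    pderiv K i (eulerInv p f) = eulerInv (p + 1) (pderiv K i f) := by
  ext α
  rw [coeff_pderiv, coeff_eulerInv, coeff_eulerInv, coeff_pderiv, map_add, Finsupp.degree_single,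
    add_right_comm, add_assoc, mul_assoc]

theorem eulerInv_succ_euler_add [CharZero K] [Fintype σ] (p : ℕ) (f : MvPowerSeries σ K) :
    eulerInv (p + 1) (∑ i, X i * pderiv K i f + (p + 1) • f) = f := by
  ext α
  have hα : ((α.degree + (p + 1) : ℕ) : K) ≠ 0 := Nat.cast_ne_zero.mpr (by omega)
  rw [coeff_eulerInv, sum_X_mul_pderiv, map_add, coeff_coeffwiseMul, map_nsmul, nsmul_eq_mul,
    ← add_mul, ← Nat.cast_add, inv_mul_cancel_left₀ hα]

theorem eulerInv_zero_euler [CharZero K] [Fintype σ] (f : MvPowerSeries σ K) :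
    eulerInv 0 (∑ i, X i * pderiv K i f) = f - C (constantCoeff f) := by
  classical
  ext α
  rw [coeff_eulerInv, sum_X_mul_pderiv, coeff_coeffwiseMul, map_sub, coeff_C, add_zero]
  split_ifs with hα
  · simp [hα]
  · have hdeg : (α.degree : K) ≠ 0 := by simpa [Finsupp.degree_eq_zero_iff] using hα
    rw [inv_mul_cancel_left₀ hdeg, sub_zero]

end Field

end PowerSeries

section DeRham

open MvPowerSeries

variable {n : ℕ}

theorem pdL_eq_pderiv (i : Fin n) (g : MvPowerSeries (Fin n) ℂ) : pdL n i g = pderiv ℂ i g := by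
  ext α
  rw [coeff_pderiv, mul_comm]
  rfl

theorem coe_wedgeE (i : Fin n) (p : ℕ) (x : ⋀[ℂ]^p (Fin n → ℂ)) :
    (wedgeE n i p x : ExteriorAlgebra ℂ (Fin n → ℂ)) =
      ExteriorAlgebra.ι ℂ (Pi.single i 1 : Fin n → ℂ) * (x : ExteriorAlgebra ℂ (Fin n → ℂ)) :=
  rfl

theorem wedgeE_wedgeE_swap (i j : Fin n) (p : ℕ) (x : ⋀[ℂ]^p (Fin n → ℂ)) :
    wedgeE n i (p + 1) (wedgeE n j p x) = -wedgeE n j (p + 1) (wedgeE n i p x) := by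
  apply Subtype.ext
  rw [Submodule.coe_neg]
  rw [coe_wedgeE, coe_wedgeE, coe_wedgeE, coe_wedgeE, ← mul_assoc,
    eq_neg_of_add_eq_zero_left (ExteriorAlgebra.ι_add_mul_swap _ _), neg_mul, mul_assoc]

theorem interiorProduct_proj_wedgeE_zero (i j : Fin n) (x : ⋀[ℂ]^0 (Fin n → ℂ)) :
    interiorProduct (.proj i) 0 (wedgeE n j 0 x) = if i = j then x else 0 := by
  apply Subtype.ext
  rw [coe_interiorProduct, coe_wedgeE, CliffordAlgebra.contractLeft_ι_mul,
    contractLeft_eq_zero_of_mem_exteriorPower_zero _ x.2, LinearMap.proj_apply, Pi.single_apply]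
  split_ifs <;> simp

theorem interiorProduct_proj_wedgeE_succ (i j : Fin n) (p : ℕ) (x : ⋀[ℂ]^(p + 1) (Fin n → ℂ)) :
    interiorProduct (.proj i) (p + 1) (wedgeE n j (p + 1) x) =
      (if i = j then x else 0) - wedgeE n j p (interiorProduct (.proj i) p x) := by
  apply Subtype.ext
  rw [coe_interiorProduct, coe_wedgeE, CliffordAlgebra.contractLeft_ι_mul, LinearMap.proj_apply,
    Pi.single_apply, Submodule.coe_sub, coe_wedgeE, coe_interiorProduct]
  split_ifs <;> simp

theorem sum_wedgeE_interiorProduct_proj (p : ℕ) (x : ⋀[ℂ]^(p + 1) (Fin n → ℂ)) :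
    ∑ i, wedgeE n i p (interiorProduct (.proj i) p x) = (p + 1) • x := by
  apply Subtype.ext
  have coord_eq (i : Fin n) : (Pi.basisFun ℂ (Fin n)).coord i = .proj i := by ext; simp
  simpa [coe_wedgeE, coe_interiorProduct, coord_eq] using
    sum_ι_mul_contractLeft_coord (Pi.basisFun ℂ (Fin n)) x.2

theorem D_tmul (p : ℕ) (g : MvPowerSeries (Fin n) ℂ) (x : ⋀[ℂ]^p (Fin n → ℂ)) :
    D n p (g ⊗ₜ x) = ∑ i, pderiv ℂ i g ⊗ₜ wedgeE n i p x := by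
  simp only [D, LinearMap.sum_apply, TensorProduct.map_tmul, pdL_eq_pderiv]

theorem D_D (p : ℕ) (w : Omega n p) : D n (p + 1) (D n p w) = 0 := by
  induction w using TensorProduct.induction_on with
  | zero => simp only [map_zero]
  | add v w hv hw => rw [map_add, map_add, hv, hw, add_zero]
  | tmul g x =>
    have eq_neg_self : D n (p + 1) (D n p (g ⊗ₜ x)) = -D n (p + 1) (D n p (g ⊗ₜ x)) := calc
      _ = ∑ i, ∑ j, pderiv ℂ j (pderiv ℂ i g) ⊗ₜ wedgeE n j (p + 1) (wedgeE n i p x) := by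
        simp only [D_tmul, map_sum]
      _ = ∑ j, ∑ i, pderiv ℂ j (pderiv ℂ i g) ⊗ₜ wedgeE n j (p + 1) (wedgeE n i p x) :=
        Finset.sum_comm
      _ = ∑ j, ∑ i, -(pderiv ℂ i (pderiv ℂ j g) ⊗ₜ wedgeE n i (p + 1) (wedgeE n j p x)) := by
        refine Finset.sum_congr rfl fun j _ => Finset.sum_congr rfl fun i _ => ?_
        rw [pderiv_pderiv_comm, wedgeE_wedgeE_swap, TensorProduct.tmul_neg]
      _ = _ := by simp only [D_tmul, map_sum, Finset.sum_neg_distrib]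
    have : IsAddTorsionFree (Omega n (p + 1 + 1)) := .of_isTorsionFree ℂ _
    exact self_eq_neg.mp eq_neg_self

/-- The interior product of differential forms with the Euler vector field `∑ᵢ xᵢ ∂ᵢ`. -/
def eulerContract (n p : ℕ) : Omega n (p + 1) →ₗ[ℂ] Omega n p :=
  ∑ i : Fin n, TensorProduct.map (LinearMap.mulLeft ℂ (X i)) (interiorProduct (.proj i) p)

theorem eulerContract_tmul (p : ℕ) (g : MvPowerSeries (Fin n) ℂ)
    (x : ⋀[ℂ]^(p + 1) (Fin n → ℂ)) :
    eulerContract n p (g ⊗ₜ x) = ∑ i, (X i * g) ⊗ₜ interiorProduct (.proj i) p x := by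
  simp only [eulerContract, LinearMap.sum_apply, TensorProduct.map_tmul, LinearMap.mulLeft_apply]

theorem eulerContract_D_zero (g : MvPowerSeries (Fin n) ℂ) (x : ⋀[ℂ]^0 (Fin n → ℂ)) :
    eulerContract n 0 (D n 0 (g ⊗ₜ x)) = (∑ i, X i * pderiv ℂ i g) ⊗ₜ x := by
  simp only [D_tmul, map_sum, eulerContract_tmul, interiorProduct_proj_wedgeE_zero,
    TensorProduct.tmul_ite, TensorProduct.sum_tmul, Finset.sum_ite_eq', Finset.mem_univ, if_true]

theorem D_eulerContract_add_eulerContract_D (p : ℕ) (g : MvPowerSeries (Fin n) ℂ)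
    (x : ⋀[ℂ]^(p + 1) (Fin n → ℂ)) :
    D n p (eulerContract n p (g ⊗ₜ x)) + eulerContract n (p + 1) (D n (p + 1) (g ⊗ₜ x)) =
      (∑ i, X i * pderiv ℂ i g + (p + 1) • g) ⊗ₜ x := by
  set mixed : Omega n (p + 1) := ∑ i, ∑ j,
    (X i * pderiv ℂ j g) ⊗ₜ wedgeE n j p (interiorProduct (.proj i) p x) with mixed_def
  have hDe : D n p (eulerContract n p (g ⊗ₜ x)) = ((p + 1) • g) ⊗ₜ x + mixed := by
    rw [TensorProduct.smul_tmul, ← sum_wedgeE_interiorProduct_proj, TensorProduct.tmul_sum]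
    simp only [mixed_def, eulerContract_tmul, map_sum, D_tmul, pderiv_X_mul,
      TensorProduct.add_tmul, TensorProduct.ite_tmul, Finset.sum_add_distrib, Finset.sum_ite_eq',
      Finset.mem_univ, if_true]
  have heD : eulerContract n (p + 1) (D n (p + 1) (g ⊗ₜ x)) =
      (∑ i, X i * pderiv ℂ i g) ⊗ₜ x - mixed := by
    rw [mixed_def, Finset.sum_comm]
    simp only [D_tmul, map_sum, eulerContract_tmul, interiorProduct_proj_wedgeE_succ,
      TensorProduct.tmul_sub, TensorProduct.tmul_ite, TensorProduct.sum_tmul,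
      Finset.sum_sub_distrib, Finset.sum_ite_eq', Finset.mem_univ, if_true]
  rw [hDe, heD, TensorProduct.add_tmul]
  abel

theorem D_rTensor_eulerInv (p : ℕ) (w : Omega n p) :
    D n p ((eulerInv p).rTensor _ w) = (eulerInv (p + 1)).rTensor _ (D n p w) := by
  induction w using TensorProduct.induction_on with
  | zero => simp only [map_zero]
  | add v w hv hw => simp only [map_add, hv, hw]
  | tmul g x => simp only [LinearMap.rTensor_tmul, D_tmul, map_sum, pderiv_eulerInv]

/-- The contracting homotopy of the de Rham complex: contraction with the Euler vector field,
normalised by the weight `|α| + p` of the monomial `p`-forms `x^α ⊗ ω`. -/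
def poincareHomotopy (n p : ℕ) : Omega n (p + 1) →ₗ[ℂ] Omega n p :=
  (eulerInv p).rTensor _ ∘ₗ eulerContract n p

theorem poincareHomotopy_D_zero (g : MvPowerSeries (Fin n) ℂ) (x : ⋀[ℂ]^0 (Fin n → ℂ)) :
    poincareHomotopy n 0 (D n 0 (g ⊗ₜ x)) = (g - C (constantCoeff g)) ⊗ₜ x := by
  rw [poincareHomotopy, LinearMap.comp_apply, eulerContract_D_zero, LinearMap.rTensor_tmul,
    eulerInv_zero_euler]

theorem D_poincareHomotopy_add_poincareHomotopy_D (p : ℕ) (w : Omega n (p + 1)) :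
    D n p (poincareHomotopy n p w) + poincareHomotopy n (p + 1) (D n (p + 1) w) = w := by
  simp only [poincareHomotopy, LinearMap.comp_apply, D_rTensor_eulerInv, ← map_add]
  induction w using TensorProduct.induction_on with
  | zero => simp only [map_zero, add_zero]
  | add v w hv hw =>
    simp only [map_add] at hv hw ⊢
    rw [add_add_add_comm, hv, hw]
  | tmul g x =>
    rw [D_eulerContract_add_eulerContract_D, LinearMap.rTensor_tmul, eulerInv_succ_euler_add]

theorem exists_eq_tmul_one0 (w : Omega n 0) :
    ∃ g : MvPowerSeries (Fin n) ℂ, w = g ⊗ₜ one0 n := by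
  induction w using TensorProduct.induction_on with
  | zero => exact ⟨0, (TensorProduct.zero_tmul _ _).symm⟩
  | add v w hv hw =>
    obtain ⟨g, rfl⟩ := hv
    obtain ⟨h, rfl⟩ := hw
    exact ⟨g + h, (TensorProduct.add_tmul g h _).symm⟩
  | tmul g x =>
    obtain ⟨r, hr⟩ := mem_exteriorPower_zero_iff.mp x.2
    have hx : x = r • one0 n :=
      Subtype.ext (hr.symm.trans (Algebra.algebraMap_eq_smul_one (R := ℂ) r))
    exact ⟨r • g, by rw [hx, TensorProduct.smul_tmul]⟩

theorem ker_D_zero :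
    LinearMap.ker (D n 0) = Submodule.span ℂ {(1 : MvPowerSeries (Fin n) ℂ) ⊗ₜ[ℂ] one0 n} := by
  apply le_antisymm
  · intro w hw
    obtain ⟨g, rfl⟩ := exists_eq_tmul_one0 w
    have hg : g ⊗ₜ[ℂ] one0 n = C (constantCoeff g) ⊗ₜ one0 n := by
      rw [← sub_eq_zero, ← TensorProduct.sub_tmul, ← poincareHomotopy_D_zero,
        LinearMap.mem_ker.mp hw, map_zero]
    rw [hg, ← mul_one (C _), ← smul_eq_C_mul, ← TensorProduct.smul_tmul']
    exact Submodule.smul_mem _ _ (Submodule.mem_span_singleton_self _)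
  · rw [Submodule.span_singleton_le_iff_mem, LinearMap.mem_ker, D_tmul]
    simp only [pderiv_one, TensorProduct.zero_tmul, Finset.sum_const_zero]

theorem ker_D_succ (n p : ℕ) : LinearMap.ker (D n (p + 1)) = LinearMap.range (D n p) := by
  apply le_antisymm
  · intro w hw
    have h := D_poincareHomotopy_add_poincareHomotopy_D p w
    rw [LinearMap.mem_ker.mp hw, map_zero, add_zero] at h
    exact ⟨_, h⟩
  · rintro _ ⟨v, rfl⟩
    exact D_D p v

theorem Omega_subsingleton_of_lt {p : ℕ} (hp : n < p) : Subsingleton (Omega n p) := by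
  have : Subsingleton (⋀[ℂ]^p (Fin n → ℂ)) :=
    exteriorPower_subsingleton_of_finrank_lt (by simpa using hp)
  infer_instance

end DeRham

/-- **Formal Poincaré Lemma (full exactness).**  The sequence
`0 → ℂ → Ω^0 → Ω^1 → ⋯ → Ωⁿ → 0` given by the exterior derivative is exact:
the kernel of `d : Ω^0 → Ω^1` is exactly the line of constants `ℂ·(1 ⊗ 1)`,
for `1 ≤ p ≤ n-1` the kernel of `d : Ω^p → Ω^{p+1}` is the image of
`d : Ω^{p-1} → Ω^p`, and `d : Ω^{n-1} → Ω^n` is surjective. -/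
theorem formal_poincare_lemma (n : ℕ) (hn : 1 ≤ n) :
    LinearMap.ker (D n 0) =
        Submodule.span ℂ {(1 : MvPowerSeries (Fin n) ℂ) ⊗ₜ[ℂ] one0 n} ∧
    (∀ p : ℕ, 1 ≤ p + 1 → p + 1 ≤ n - 1 →
        LinearMap.ker (D n (p + 1)) = LinearMap.range (D n p)) ∧
    Function.Surjective (D n (n - 1)) := by
  refine ⟨ker_D_zero, fun p _ _ => ker_D_succ n p, ?_⟩
  obtain ⟨m, rfl⟩ := Nat.exists_eq_add_of_le' hn
  have top_eq_zero : Subsingleton (Omega (m + 1) (m + 2)) := Omega_subsingleton_of_lt (by omega)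
  rw [Nat.add_sub_cancel, ← LinearMap.range_eq_top, ← ker_D_succ, LinearMap.ker_eq_top]
  exact Subsingleton.elim _ _
end
end

section
/- Koszul syzygies of the Jacobian ideal: if g₁,…,gₙ ∈ R satisfy Σ_{i=1}^n ∂ᵢ(f)·gᵢ = 0, then the vector (g₁,…,gₙ) ∈ R^n lies in the R-submodule of R^n generated by the Koszul relations ∂ⱼ(f)·eᵢ − ∂ᵢ(f)·eⱼ for 1 ≤ i < j ≤ n, where e₁,…,eₙ denotes the standard basis of the free module R^n. -/
noncomputable section

/-- The Jacobian ideal `J(f) = ⟨∂₁f,…,∂ₙf⟩` of `f`. -/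
def Jf (n : ℕ) (f : MvPowerSeries (Fin n) ℂ) : Ideal (MvPowerSeries (Fin n) ℂ) :=
  Ideal.span (Set.range fun i : Fin n => pd i f)

/-- The maximal ideal `⟨x₁,…,xₙ⟩` of `ℂ[[x₁,…,xₙ]]`. -/
def mx (n : ℕ) : Ideal (MvPowerSeries (Fin n) ℂ) :=
  Ideal.span (Set.range (MvPowerSeries.X : Fin n → MvPowerSeries (Fin n) ℂ))

/-!
Since `xᵢᵐ ∈ J(f)` for every `i`, the Jacobian ideal, which has `n` generators, contains the
regular sequence `x₁ᵐ, …, xₙᵐ` of length `n`. This forces the Koszul complex of `∂₁f, …, ∂ₙf` to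
be acyclic in positive degrees, and the claim is the vanishing of its first homology. For the
acyclicity, the elements `r` of the regular sequence are divided out of the coefficient module `M`
one at a time: `r` acts by zero on Koszul homology, so vanishing for `M/rM` in one degree gives
vanishing for `M` in the degree below, and in degrees above `n` the complex is zero.
-/

open Module Function RingTheory.Sequence
open scoped TensorProduct Pointwise

/-- The Koszul relations `F j • eᵢ - F i • eⱼ`, `i < j`, among the entries of a family `F`,
as vectors in the free module `ι → R`. -/
def koszulRelations {ι R : Type*} [LinearOrder ι] [CommRing R] (F : ι → R) : Set (ι → R) :=
  {v | ∃ i j : ι, i < j ∧ v = Pi.single i (F j) - Pi.single j (F i)}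

section Koszul

variable {R N M : Type*} [CommRing R] [AddCommGroup N] [Module R N] [AddCommGroup M] [Module R M]

lemma ι_mul_mem_exteriorPower (c : N) {k : ℕ} {x : ExteriorAlgebra R N} (hx : x ∈ ⋀[R]^k N) :
    ExteriorAlgebra.ι R c * x ∈ ⋀[R]^(k + 1) N := by
  rw [ExteriorAlgebra.exteriorPower, pow_succ']
  exact Submodule.mul_mem_mul (LinearMap.mem_range_self _ c) hx

/-- The exterior product `x ↦ c ∧ x`, as a map `⋀ᵏ N → ⋀ᵏ⁺¹ N`. -/
def wedgeLeft (c : N) (k : ℕ) : ⋀[R]^k N →ₗ[R] ⋀[R]^(k + 1) N :=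
  (LinearMap.mulLeft R (ExteriorAlgebra.ι R c)).restrict fun _ ↦ ι_mul_mem_exteriorPower c

lemma contractLeft_mem_exteriorPower_s7 (φ : Dual R N) {k : ℕ} {x : ExteriorAlgebra R N}
    (hx : x ∈ ⋀[R]^(k + 1) N) :
    CliffordAlgebra.contractLeft (Q := (0 : QuadraticForm R N)) φ x ∈ ⋀[R]^k N := by
  induction k generalizing x with
  | zero =>
    rw [ExteriorAlgebra.exteriorPower, zero_add, pow_one] at hx
    obtain ⟨v, rfl⟩ := hx
    rw [ExteriorAlgebra.exteriorPower, pow_zero]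
    exact (CliffordAlgebra.contractLeft_ι (0 : QuadraticForm R N) φ v).symm ▸
      Submodule.algebraMap_mem (φ v)
  | succ k ih =>
    rw [ExteriorAlgebra.exteriorPower, pow_succ'] at hx
    refine Submodule.mul_induction_on hx ?_ fun y z hy hz ↦ ?_
    · rintro _ ⟨v, rfl⟩ y hy
      exact (CliffordAlgebra.contractLeft_ι_mul (Q := 0) φ v y).symm ▸
        Submodule.sub_mem _ (Submodule.smul_mem _ _ hy) (ι_mul_mem_exteriorPower v (ih hy))
    · rw [map_add]
      exact Submodule.add_mem _ hy hz

/-- The differential `⋀ᵏ⁺¹ N → ⋀ᵏ N` of the Koszul complex of a linear form `φ`, realised as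
contraction by `φ` in the exterior algebra (the Clifford algebra of the zero form). For
`N = Rⁿ` and `φ = (F₁, …, Fₙ)` this is the Koszul complex of the sequence `F`; coefficients in a
module `M` are obtained by applying `LinearMap.lTensor M`. -/
def koszulDifferential (φ : Dual R N) (k : ℕ) : ⋀[R]^(k + 1) N →ₗ[R] ⋀[R]^k N :=
  (CliffordAlgebra.contractLeft (Q := (0 : QuadraticForm R N)) φ).restrict
    fun _ ↦ contractLeft_mem_exteriorPower_s7 φ

variable (φ : Dual R N)

lemma koszulDifferential_koszulDifferential (k : ℕ) (x : ⋀[R]^(k + 2) N) :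
    koszulDifferential φ k (koszulDifferential φ (k + 1) x) = 0 :=
  Subtype.ext (CliffordAlgebra.contractLeft_contractLeft (Q := 0) φ x.1)

lemma koszulDifferential_wedgeLeft (c : N) (k : ℕ) (x : ⋀[R]^(k + 1) N) :
    koszulDifferential φ (k + 1) (wedgeLeft c (k + 1) x) =
      φ c • x - wedgeLeft c k (koszulDifferential φ k x) :=
  Subtype.ext (CliffordAlgebra.contractLeft_ι_mul (Q := 0) φ c x.1)

lemma lTensor_koszulDifferential_koszulDifferential (k : ℕ) (x : M ⊗[R] ⋀[R]^(k + 2) N) :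
    (koszulDifferential φ k).lTensor M ((koszulDifferential φ (k + 1)).lTensor M x) = 0 := by
  have comp_eq_zero : koszulDifferential φ k ∘ₗ koszulDifferential φ (k + 1) = 0 :=
    LinearMap.ext (koszulDifferential_koszulDifferential φ k)
  rw [← LinearMap.lTensor_comp_apply, comp_eq_zero, LinearMap.lTensor_zero, LinearMap.zero_apply]

lemma lTensor_koszulDifferential_wedgeLeft (c : N) (k : ℕ) (x : M ⊗[R] ⋀[R]^(k + 1) N) :
    (koszulDifferential φ (k + 1)).lTensor M ((wedgeLeft c (k + 1)).lTensor M x) =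
      φ c • x - (wedgeLeft c k).lTensor M ((koszulDifferential φ k).lTensor M x) := by
  have homotopy : koszulDifferential φ (k + 1) ∘ₗ wedgeLeft c (k + 1) =
      φ c • LinearMap.id - wedgeLeft c k ∘ₗ koszulDifferential φ k :=
    LinearMap.ext (koszulDifferential_wedgeLeft φ c k)
  simpa only [LinearMap.lTensor_comp, LinearMap.lTensor_sub, LinearMap.lTensor_smul,
    LinearMap.lTensor_id, LinearMap.comp_apply, LinearMap.sub_apply, LinearMap.smul_apply,
    LinearMap.id_apply] using DFunLike.congr_fun (congrArg (LinearMap.lTensor M) homotopy) x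

lemma rTensor_mkQ_smul_top_eq_zero_iff {E : Type*} [AddCommGroup E] [Module R E] {r : R}
    {x : M ⊗[R] E} :
    (Submodule.mkQ (r • (⊤ : Submodule R M))).rTensor E x = 0 ↔ ∃ y, r • y = x := by
  have mul_exact :
      Exact (r • LinearMap.id : M →ₗ[R] M) (Submodule.mkQ (r • (⊤ : Submodule R M))) := by
    rw [LinearMap.exact_iff, Submodule.ker_mkQ]
    exact (LinearMap.range_eq_map _).symm
  simpa only [LinearMap.rTensor_smul, LinearMap.rTensor_id, Set.mem_range, LinearMap.smul_apply,
    LinearMap.id_apply] using rTensor_exact E mul_exact (Submodule.mkQ_surjective _) x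

variable {φ}

/-- Multiplication by `r = φ c` is null-homotopic on the Koszul complex, so in the long exact
sequence of `0 → M → M → M/rM → 0` the connecting maps `Hₖ₊₂(M/rM) → Hₖ₊₁(M)` are surjective. -/
lemma exact_koszulDifferential_of_quotSMulTop {k : ℕ} [Flat R (⋀[R]^(k + 1) N)] {r : R}
    (hrφ : r ∈ LinearMap.range φ) (hr : IsSMulRegular M r)
    (hexact : Exact ((koszulDifferential φ (k + 2)).lTensor (QuotSMulTop r M))
      ((koszulDifferential φ (k + 1)).lTensor (QuotSMulTop r M))) :
    Exact ((koszulDifferential φ (k + 1)).lTensor M) ((koszulDifferential φ k).lTensor M) := by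
  obtain ⟨c, rfl⟩ := hrφ
  refine fun x ↦ ⟨fun hx ↦ ?_,
    fun ⟨y, hy⟩ ↦ hy ▸ lTensor_koszulDifferential_koszulDifferential φ k y⟩
  let π := Submodule.mkQ (φ c • (⊤ : Submodule R M))
  set w := (wedgeLeft c (k + 1)).lTensor M x
  have dw : (koszulDifferential φ (k + 1)).lTensor M w = φ c • x := by
    rw [lTensor_koszulDifferential_wedgeLeft, hx, map_zero, sub_zero]
  have π_comm (j : ℕ) (y : M ⊗[R] ⋀[R]^(j + 1) N) :
      (koszulDifferential φ j).lTensor (QuotSMulTop (φ c) M) (π.rTensor _ y) =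
        π.rTensor _ ((koszulDifferential φ j).lTensor M y) :=
    DFunLike.congr_fun ((LinearMap.lTensor_comp_rTensor ..).trans
      (LinearMap.rTensor_comp_lTensor ..).symm) y
  have w_cycle : (koszulDifferential φ (k + 1)).lTensor (QuotSMulTop (φ c) M)
      (π.rTensor _ w) = 0 := by
    rw [π_comm, dw]
    exact rTensor_mkQ_smul_top_eq_zero_iff.2 ⟨x, rfl⟩
  obtain ⟨θ', hθ'⟩ := (hexact _).1 w_cycle
  obtain ⟨θ, rfl⟩ := LinearMap.rTensor_surjective _ (Submodule.mkQ_surjective _) θ'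
  obtain ⟨ρ, hρ⟩ : ∃ ρ, φ c • ρ = w - (koszulDifferential φ (k + 2)).lTensor M θ := by
    refine rTensor_mkQ_smul_top_eq_zero_iff.1 ?_
    rw [map_sub, ← π_comm, hθ', sub_self]
  refine ⟨ρ, hr.rTensor (⋀[R]^(k + 1) N) ?_⟩
  simpa only [map_smul, map_sub, dw, lTensor_koszulDifferential_koszulDifferential, sub_zero]
    using congrArg ((koszulDifferential φ (k + 1)).lTensor M) hρ

lemma subsingleton_exteriorPower {ι : Type*} [Fintype ι] {v : ι → N}
    (hv : Submodule.span R (Set.range v) = ⊤) {k : ℕ} (hk : Fintype.card ι < k) :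
    Subsingleton (⋀[R]^k N) := by
  classical
  let : LinearOrder ι := linearOrderOfSTO WellOrderingRel
  have : IsEmpty (Set.powersetCard ι k) :=
    ⟨fun s ↦ ((s.2 ▸ Finset.card_le_univ s.1).trans_lt hk).false⟩
  rw [← Submodule.subsingleton_iff R, ← subsingleton_iff_bot_eq_top,
    ← exteriorPower.ιMulti_family_span_of_span R hv, Set.range_eq_empty, Submodule.span_empty]

theorem exact_koszulDifferential_of_isWeaklyRegular {ι : Type*} [Fintype ι] (b : Basis ι R N)
    {rs : List R} (hrs : IsWeaklyRegular M rs) (hrsφ : ∀ r ∈ rs, r ∈ LinearMap.range φ) {k : ℕ}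
    (hk : Fintype.card ι ≤ k + rs.length) :
    Exact ((koszulDifferential φ (k + 1)).lTensor M) ((koszulDifferential φ k).lTensor M) := by
  have := Free.of_basis b
  induction hrs generalizing k with
  | nil M =>
    have : Subsingleton (⋀[R]^(k + 1) N) :=
      subsingleton_exteriorPower b.span_eq (Nat.lt_succ_of_le hk)
    intro x
    simpa [Subsingleton.elim x 0] using ⟨0, map_zero _⟩
  | cons r rs hr _ ih =>
    rw [List.forall_mem_cons] at hrsφ
    exact exact_koszulDifferential_of_quotSMulTop hrsφ.1 hr
      (ih hrsφ.2 (by rw [List.length_cons] at hk; omega))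

variable (φ)

lemma ιMulti_succ_eq_wedgeLeft {k : ℕ} (v : Fin (k + 1) → N) :
    exteriorPower.ιMulti R (k + 1) v =
      wedgeLeft (v 0) k (exteriorPower.ιMulti R k (Matrix.vecTail v)) :=
  Subtype.ext (ExteriorAlgebra.ιMulti_succ_apply v)

lemma koszulDifferential_ιMulti_one (v : Fin 1 → N) :
    koszulDifferential φ 0 (exteriorPower.ιMulti R 1 v) =
      φ (v 0) • exteriorPower.ιMulti R 0 ![] := by
  have coe_ιMulti_zero : (exteriorPower.ιMulti R 0 ![] : ⋀[R]^0 N).1 = 1 :=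
    ExteriorAlgebra.ιMulti_zero_apply _
  have coe_ιMulti_one : (exteriorPower.ιMulti R 1 v).1 = ExteriorAlgebra.ι R (v 0) := by
    rw [exteriorPower.ιMulti_apply_coe, ExteriorAlgebra.ιMulti_succ_apply,
      ExteriorAlgebra.ιMulti_zero_apply, mul_one]
  apply Subtype.ext
  calc CliffordAlgebra.contractLeft (Q := 0) φ (exteriorPower.ιMulti R 1 v).1
    _ = algebraMap R (ExteriorAlgebra R N) (φ (v 0)) := by
      rw [coe_ιMulti_one]
      exact CliffordAlgebra.contractLeft_ι (0 : QuadraticForm R N) φ (v 0)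
    _ = φ (v 0) • (exteriorPower.ιMulti R 0 ![] : ⋀[R]^0 N).1 := by
      rw [Algebra.algebraMap_eq_smul_one, coe_ιMulti_zero]

lemma koszulDifferential_ιMulti_two (v : Fin 2 → N) :
    koszulDifferential φ 1 (exteriorPower.ιMulti R 2 v) =
      φ (v 0) • exteriorPower.ιMulti R 1 ![v 1] - φ (v 1) • exteriorPower.ιMulti R 1 ![v 0] := by
  have tail_two : Matrix.vecTail v = ![v 1] := by
    ext i
    fin_cases i
    rfl
  have tail_one : Matrix.vecTail ![v 0] = ![] := Subsingleton.elim _ _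
  rw [ιMulti_succ_eq_wedgeLeft, koszulDifferential_wedgeLeft, tail_two,
    koszulDifferential_ιMulti_one, map_smul, ιMulti_succ_eq_wedgeLeft ![v 0], tail_one]
  rfl

lemma zeroEquiv_koszulDifferential_oneEquiv_symm (v : N) :
    exteriorPower.zeroEquiv R N
      (koszulDifferential φ 0 ((exteriorPower.oneEquiv R N).symm v)) = φ v := by
  rw [exteriorPower.oneEquiv_symm_apply, koszulDifferential_ιMulti_one, map_smul,
    exteriorPower.zeroEquiv_ιMulti, smul_eq_mul, mul_one]

lemma oneEquiv_koszulDifferential_ιMulti (v : Fin 2 → N) :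
    exteriorPower.oneEquiv R N (koszulDifferential φ 1 (exteriorPower.ιMulti R 2 v)) =
      φ (v 0) • v 1 - φ (v 1) • v 0 := by
  rw [koszulDifferential_ιMulti_two, map_sub, map_smul, map_smul, exteriorPower.oneEquiv_ιMulti,
    exteriorPower.oneEquiv_ιMulti, Matrix.cons_val_zero, Matrix.cons_val_zero]

end Koszul

section Syzygies

variable {R ι : Type*} [CommRing R] [Fintype ι] [LinearOrder ι]

lemma range_oneEquiv_comp_koszulDifferential_le (F : ι → R) :
    LinearMap.range ((exteriorPower.oneEquiv R (ι → R)).toLinearMap ∘ₗ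
      koszulDifferential (Fintype.linearCombination R F) 1) ≤
      Submodule.span R (koszulRelations F) := by
  let φ := Fintype.linearCombination R F
  let e := Pi.basisFun R ι
  rw [LinearMap.range_eq_map, ← exteriorPower.ιMulti_family_span_of_span R e.span_eq,
    Submodule.map_span_le]
  rintro _ ⟨s, rfl⟩
  let p := Set.powersetCard.ofFinEmbEquiv.symm s
  have hp : p 0 < p 1 := p.strictMono Fin.zero_lt_one
  refine (Submodule.neg_mem_iff _).1 (Submodule.subset_span ⟨p 0, p 1, hp, ?_⟩)
  rw [neg_eq_iff_eq_neg, neg_sub]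
  calc exteriorPower.oneEquiv R _ (koszulDifferential φ 1 (exteriorPower.ιMulti R 2 (e ∘ p)))
    _ = φ (e (p 0)) • e (p 1) - φ (e (p 1)) • e (p 0) :=
      oneEquiv_koszulDifferential_ιMulti φ (e ∘ p)
    _ = Pi.single (p 1) (F (p 0)) - Pi.single (p 0) (F (p 1)) := by
      simp [φ, e, ← Pi.single_smul]

theorem mem_span_koszulRelations_of_isWeaklyRegular {F g : ι → R} {rs : List R}
    (hrs : IsWeaklyRegular R rs) (hrsF : ∀ r ∈ rs, r ∈ Ideal.span (Set.range F))
    (hcard : Fintype.card ι ≤ rs.length) (hg : ∑ i, F i * g i = 0) :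
    g ∈ Submodule.span R (koszulRelations F) := by
  let φ := Fintype.linearCombination R F
  have range_φ : LinearMap.range φ = Ideal.span (Set.range F) := Fintype.range_linearCombination R F
  have exact_one : Exact (koszulDifferential φ 1) (koszulDifferential φ 0) :=
    (FaithfullyFlat.lTensor_exact_iff_exact R R _ _).1 <|
      exact_koszulDifferential_of_isWeaklyRegular (Pi.basisFun R ι) hrs (by rwa [range_φ])
        (by rwa [zero_add])
  have g_cycle : koszulDifferential φ 0 ((exteriorPower.oneEquiv R _).symm g) = 0 := by
    apply (exteriorPower.zeroEquiv R (ι → R)).injective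
    rw [zeroEquiv_koszulDifferential_oneEquiv_symm, map_zero, Fintype.linearCombination_apply]
    simpa only [smul_eq_mul, mul_comm] using hg
  obtain ⟨θ, hθ⟩ := (exact_one _).1 g_cycle
  exact range_oneEquiv_comp_koszulDifferential_le F ⟨θ, by simp [φ, hθ]⟩

end Syzygies

section PowerSeries

open MvPowerSeries

variable {σ A : Type*} [CommRing A]

lemma mem_ofList_X_pow_iff {e : σ → ℕ} {l : List σ} {h : MvPowerSeries σ A} :
    h ∈ Ideal.ofList (l.map fun i ↦ X i ^ e i) ↔
      ∀ α : σ →₀ ℕ, (∀ i ∈ l, α i < e i) → coeff α h = 0 := by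
  induction l generalizing h with
  | nil => simp [MvPowerSeries.ext_iff]
  | cons i l ih =>
    simp only [List.map_cons, Ideal.ofList_cons, List.forall_mem_cons, and_imp]
    constructor
    · intro hh α hi hl
      obtain ⟨p, hp, q, hq, rfl⟩ := Submodule.mem_sup.1 hh
      rw [map_add, X_pow_dvd_iff.1 (Ideal.mem_span_singleton.1 hp) α hi, ih.1 hq α hl, add_zero]
    · intro hh
      let q : MvPowerSeries σ A := fun α ↦ if α i < e i then coeff α h else 0
      have coeff_q (α : σ →₀ ℕ) : coeff α q = if α i < e i then coeff α h else 0 := rfl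
      have hq : q ∈ Ideal.ofList (l.map fun i ↦ X i ^ e i) := by
        refine ih.2 fun α hl ↦ ?_
        rw [coeff_q]
        split_ifs with hi
        exacts [hh α hi hl, rfl]
      have hp : h - q ∈ Ideal.span {X i ^ e i} := by
        refine Ideal.mem_span_singleton.2 (X_pow_dvd_iff.2 fun α hi ↦ ?_)
        rw [map_sub, coeff_q, if_pos hi, sub_self]
      exact sub_add_cancel h q ▸ Submodule.add_mem_sup hp hq

lemma mem_ofList_X_pow_of_X_pow_mul_mem {e : σ → ℕ} {l : List σ} {i : σ} (hi : i ∉ l)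
    {h : MvPowerSeries σ A} (hh : X i ^ e i * h ∈ Ideal.ofList (l.map fun j ↦ X j ^ e j)) :
    h ∈ Ideal.ofList (l.map fun j ↦ X j ^ e j) := by
  rw [mem_ofList_X_pow_iff] at hh ⊢
  intro α hα
  have shifted := hh (Finsupp.single i (e i) + α) fun j hj ↦ by
    rw [Finsupp.add_apply, Finsupp.single_eq_of_ne (ne_of_mem_of_not_mem hj hi), zero_add]
    exact hα j hj
  rwa [X_pow_eq, coeff_add_monomial_mul, one_mul] at shifted

theorem isWeaklyRegular_X_pow (e : σ → ℕ) {l : List σ} (hl : l.Nodup) :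
    IsWeaklyRegular (MvPowerSeries σ A)
      (l.map fun i ↦ (X i ^ e i : MvPowerSeries σ A)) where
  regular_mod_prev k hk := by
    rw [List.length_map] at hk
    rw [isSMulRegular_quotient_iff_mem_of_smul_mem, List.getElem_map, ← List.map_take,
      smul_eq_mul, Ideal.mul_top]
    intro h
    exact mem_ofList_X_pow_of_X_pow_mul_mem fun h ↦ by
      obtain ⟨j, hj, hjk⟩ := List.mem_take_iff_getElem.1 h
      rw [hl.getElem_inj_iff] at hjk
      omega

theorem koszul_syzygies_general {ι : Type*} [Fintype ι] [LinearOrder ι]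
    {F g : ι → MvPowerSeries ι A} {m : ℕ}
    (hF : Ideal.span (Set.range X) ^ m ≤ Ideal.span (Set.range F))
    (hg : ∑ i, F i * g i = 0) :
    g ∈ Submodule.span (MvPowerSeries ι A) (koszulRelations F) := by
  refine mem_span_koszulRelations_of_isWeaklyRegular
    (isWeaklyRegular_X_pow (fun _ ↦ m) Finset.univ.nodup_toList) ?_ (by simp) hg
  rw [List.forall_mem_map]
  exact fun i _ ↦ hF (Ideal.pow_mem_pow (Ideal.subset_span (Set.mem_range_self i)) m)

end PowerSeries

/-- **Koszul syzygies of the Jacobian ideal**: if `Σᵢ ∂ᵢ(f)·gᵢ = 0` then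
`(g₁,…,gₙ)` lies in the `R`-submodule of `Rⁿ` generated by the Koszul relations
`∂ⱼ(f)·eᵢ − ∂ᵢ(f)·eⱼ` for `i < j`. -/
theorem koszul_syzygies (n : ℕ) (hn : 1 ≤ n) (f : MvPowerSeries (Fin n) ℂ)
    (hf0 : MvPowerSeries.constantCoeff f = 0)
    (m : ℕ) (hm : 1 ≤ m) (hiso : mx n ^ m ≤ Jf n f)
    (g : Fin n → MvPowerSeries (Fin n) ℂ)
    (hg : ∑ i : Fin n, pd i f * g i = 0) :
    g ∈ Submodule.span (MvPowerSeries (Fin n) ℂ)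
      {v : Fin n → MvPowerSeries (Fin n) ℂ |
        ∃ i j : Fin n, i < j ∧
          v = Pi.single i (pd j f) - Pi.single j (pd i f)} :=
  koszul_syzygies_general (F := fun i ↦ pd i f) hiso hg
end
end
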